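/- arXiv:2106.13406 — 5 statements merged into one kernel-verified Lean document; each statement's English description precedes it below -/
import Mathlib

section
/- Let l, L, ℓ₁, ℓ₂, ℓ₃ be real numbers with 0 < l ≤ L and l ≤ ℓᵢ ≤ L for i = 1, 2, 3, and let w ≥ 0 be a real number satisfying cosh w = (cosh(ℓ₃/2) + cosh(ℓ₁/2)·cosh(ℓ₂/2)) / (sinh(ℓ₁/2)·sinh(ℓ₂/2)). Then w < log(cosh(L/2)) + K₁(l), where K₁(l) = log(2 / sinh²(l/2)) + log(cosh²(l/2) + 1) + log 2. -/
noncomputable def K₁ (l : ℝ) : ℝ :=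
  Real.log (2 / Real.sinh (l / 2) ^ 2) + Real.log (Real.cosh (l / 2) ^ 2 + 1) +
    Real.log 2

/-!
The hexagon relation reads `cosh w = cosh (ℓ₃ / 2) / (sinh (ℓ₁ / 2) * sinh (ℓ₂ / 2)) +
coth (ℓ₁ / 2) * coth (ℓ₂ / 2)`. Both `1 / sinh` and `coth` decrease on the positive reals, so
replacing `ℓ₁` and `ℓ₂` by `l` can only increase the right-hand side, and since `1 ≤ cosh (ℓ₃ / 2)`
this factor can be pulled out of both terms. The bound on `w` then follows from
`exp w < 2 * cosh w`.
-/

section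

open Real

theorem lt_log_two_mul_cosh (x : ℝ) : x < log (2 * cosh x) := by
  rw [lt_log_iff_exp_lt (by positivity), cosh_eq]
  linarith [exp_pos (-x)]

theorem antitoneOn_cosh_div_sinh : AntitoneOn (fun x ↦ cosh x / sinh x) (Set.Ioi 0) := by
  intro x (hx : 0 < x) y (hy : 0 < y) hxy
  have sinh_sub_nonneg : 0 ≤ sinh (y - x) := sinh_nonneg_iff.2 (sub_nonneg.2 hxy)
  rw [sinh_sub] at sinh_sub_nonneg
  rw [div_le_div_iff₀ (sinh_pos_iff.2 hy) (sinh_pos_iff.2 hx)]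
  linarith

theorem cosh_add_cosh_mul_cosh_div_le {s a b : ℝ} (hs : 0 < s) (ha : s ≤ a) (hb : s ≤ b) (c : ℝ) :
    (cosh c + cosh a * cosh b) / (sinh a * sinh b) ≤
      cosh c * ((cosh s ^ 2 + 1) / sinh s ^ 2) := by
  have ha_pos : 0 < a := hs.trans_le ha
  have hb_pos : 0 < b := hs.trans_le hb
  have sinh_le_sinh_a : sinh s ≤ sinh a := sinh_le_sinh.2 ha
  have sinh_le_sinh_b : sinh s ≤ sinh b := sinh_le_sinh.2 hb
  have coth_a_le : cosh a / sinh a ≤ cosh s / sinh s := antitoneOn_cosh_div_sinh hs ha_pos ha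
  have coth_b_le : cosh b / sinh b ≤ cosh s / sinh s := antitoneOn_cosh_div_sinh hs hb_pos hb
  calc
    _ = cosh c / (sinh a * sinh b) + cosh a / sinh a * (cosh b / sinh b) := by ring
    _ ≤ cosh c / (sinh s * sinh s) + cosh s / sinh s * (cosh s / sinh s) := by gcongr
    _ ≤ cosh c / (sinh s * sinh s) + cosh c * (cosh s / sinh s * (cosh s / sinh s)) :=
      add_le_add_right (le_mul_of_one_le_left (mul_self_nonneg _) (one_le_cosh c)) _
    _ = cosh c * ((cosh s ^ 2 + 1) / sinh s ^ 2) := by ring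

theorem K₁_eq_log_add_log_two {l : ℝ} (hl : l ≠ 0) :
    K₁ l = log (2 * ((cosh (l / 2) ^ 2 + 1) / sinh (l / 2) ^ 2)) + log 2 := by
  have sinh_ne : sinh (l / 2) ≠ 0 := sinh_ne_zero.2 (div_ne_zero hl two_ne_zero)
  rw [K₁, ← log_mul (div_ne_zero two_ne_zero (pow_ne_zero 2 sinh_ne)) (by positivity),
    div_mul_eq_mul_div, mul_div_assoc]

theorem hexagon_side_lt_log_cosh_add_general {l ℓ₁ ℓ₂ ℓ₃ w : ℝ}
    (hl : 0 < l) (h1 : l ≤ ℓ₁) (h2 : l ≤ ℓ₂)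
    (hhex : cosh w =
      (cosh (ℓ₃ / 2) + cosh (ℓ₁ / 2) * cosh (ℓ₂ / 2)) / (sinh (ℓ₁ / 2) * sinh (ℓ₂ / 2))) :
    w + log 2 < log (cosh (ℓ₃ / 2)) + K₁ l := by
  rw [K₁_eq_log_add_log_two hl.ne', ← add_assoc]
  set r : ℝ := (cosh (l / 2) ^ 2 + 1) / sinh (l / 2) ^ 2
  have r_pos : 0 < r := by positivity
  have cosh_w_le : cosh w ≤ cosh (ℓ₃ / 2) * r :=
    hhex.trans_le <| cosh_add_cosh_mul_cosh_div_le (by linarith) (by linarith) (by linarith) _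
  gcongr
  calc
    w < log (2 * cosh w) := lt_log_two_mul_cosh w
    _ ≤ log (2 * (cosh (ℓ₃ / 2) * r)) := by gcongr
    _ = log (cosh (ℓ₃ / 2)) + log (2 * r) := by
      rw [mul_left_comm, log_mul (cosh_pos _).ne' (mul_pos two_pos r_pos).ne']

end

theorem hexagon_side_lt_log_cosh_add (l L ℓ₁ ℓ₂ ℓ₃ w : ℝ)
    (hl : 0 < l) (hlL : l ≤ L)
    (h1 : l ≤ ℓ₁) (h1' : ℓ₁ ≤ L) (h2 : l ≤ ℓ₂) (h2' : ℓ₂ ≤ L)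
    (h3 : l ≤ ℓ₃) (h3' : ℓ₃ ≤ L) (hw : 0 ≤ w)
    (hhex : Real.cosh w =
      (Real.cosh (ℓ₃ / 2) + Real.cosh (ℓ₁ / 2) * Real.cosh (ℓ₂ / 2)) /
        (Real.sinh (ℓ₁ / 2) * Real.sinh (ℓ₂ / 2))) :
    w < Real.log (Real.cosh (L / 2)) + K₁ l := by
  have log_cosh_le : Real.log (Real.cosh (ℓ₃ / 2)) ≤ Real.log (Real.cosh (L / 2)) :=
    Real.log_le_log (Real.cosh_pos _) <|
      Real.cosh_le_cosh.2 (abs_le_abs_of_nonneg (by linarith) (by linarith))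
  linarith [hexagon_side_lt_log_cosh_add_general hl h1 h2 hhex, Real.log_pos one_lt_two]
end

section
/- Let l, L, ℓ₀, ℓ₁, ℓ₂ be real numbers with 0 < l ≤ L, l ≤ ℓ₁ ≤ L, l ≤ ℓ₂ ≤ L, and ℓ₀ > 0. Let x₀ be a real number with x₀ + η(ℓ₀) ≥ 0 satisfying cosh(x₀ + η(ℓ₀)) = (cosh(ℓ₁/2) + cosh(ℓ₀/2)·cosh(ℓ₂/2)) / (sinh(ℓ₀/2)·sinh(ℓ₂/2)), where η(ℓ) = arsinh(1/sinh(ℓ/2)). Then x₀ < L/2 + log((1 + cosh(ℓ₀/2)) / sinh(l/2)). -/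
noncomputable def η (ℓ : ℝ) : ℝ := Real.arsinh (1 / Real.sinh (ℓ / 2))

/-!
Exponentiate. Since `exp (η ℓ₀) = (1 + cosh (ℓ₀ / 2)) / sinh (ℓ₀ / 2)` and `exp t < 2 cosh t`, the
hexagon relation bounds `exp x₀ * sinh (ℓ₂ / 2)` by twice the mean of `cosh (ℓ₁ / 2)` and
`cosh (ℓ₂ / 2)` with weights `1` and `cosh (ℓ₀ / 2)`. Both are at most `exp (L / 2)`, so the
dependence on `ℓ₀` disappears; putting `1 + cosh (ℓ₀ / 2) ≥ 2` back in only weakens the estimate.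
-/

open Real

theorem sinh_half_pos {ℓ : ℝ} (hℓ : 0 < ℓ) : 0 < sinh (ℓ / 2) :=
  sinh_pos_iff.2 (half_pos hℓ)

theorem exp_lt_two_mul_cosh (x : ℝ) : exp x < 2 * cosh x := by
  linarith [cosh_add_sinh x, sinh_lt_cosh x]

theorem cosh_le_exp_abs (x : ℝ) : cosh x ≤ exp |x| := by
  rw [← cosh_abs, ← cosh_add_sinh]
  exact le_add_of_nonneg_right (sinh_nonneg_iff.2 (abs_nonneg x))

theorem cosh_half_le_exp_half {ℓ L : ℝ} (h : |ℓ| ≤ L) : cosh (ℓ / 2) ≤ exp (L / 2) :=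
  (cosh_le_exp_abs _).trans <| exp_le_exp.2 <| by rw [abs_div, abs_two]; gcongr

theorem exp_η {ℓ : ℝ} (hℓ : 0 < ℓ) : exp (η ℓ) = (1 + cosh (ℓ / 2)) / sinh (ℓ / 2) := by
  have := sinh_half_pos hℓ
  have hsq : 1 + (1 / sinh (ℓ / 2)) ^ 2 = (cosh (ℓ / 2) / sinh (ℓ / 2)) ^ 2 := by
    rw [div_pow, div_pow, cosh_sq]
    field_simp
  rw [η, exp_arsinh, hsq, sqrt_sq (by positivity), ← add_div]

theorem exp_truncated_side_lt {ℓ₀ ℓ₁ ℓ₂ x₀ : ℝ} (h0 : 0 < ℓ₀) (h2 : 0 < ℓ₂)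
    (hhex : cosh (x₀ + η ℓ₀) =
      (cosh (ℓ₁ / 2) + cosh (ℓ₀ / 2) * cosh (ℓ₂ / 2)) / (sinh (ℓ₀ / 2) * sinh (ℓ₂ / 2))) :
    exp x₀ < 2 * ((cosh (ℓ₁ / 2) + cosh (ℓ₀ / 2) * cosh (ℓ₂ / 2)) / (1 + cosh (ℓ₀ / 2))) /
      sinh (ℓ₂ / 2) := by
  have := sinh_half_pos h0
  have := sinh_half_pos h2
  calc exp x₀ = exp (x₀ + η ℓ₀) / exp (η ℓ₀) := by rw [← exp_sub, add_sub_cancel_right]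
    _ < 2 * cosh (x₀ + η ℓ₀) / exp (η ℓ₀) := by gcongr; exact exp_lt_two_mul_cosh _
    _ = _ := by rw [hhex, exp_η h0]; field_simp

theorem truncated_side_bound_one_cusp_general {l L ℓ₀ ℓ₁ ℓ₂ x₀ : ℝ}
    (hl : 0 < l) (h1 : |ℓ₁| ≤ L) (h2 : l ≤ ℓ₂) (h2' : ℓ₂ ≤ L) (h0 : 0 < ℓ₀)
    (hhex : cosh (x₀ + η ℓ₀) =
      (cosh (ℓ₁ / 2) + cosh (ℓ₀ / 2) * cosh (ℓ₂ / 2)) / (sinh (ℓ₀ / 2) * sinh (ℓ₂ / 2))) :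
    x₀ < L / 2 + log (2 / sinh (l / 2)) := by
  have hℓ₂ : 0 < ℓ₂ := hl.trans_le h2
  have := sinh_half_pos hl
  have hmean : (cosh (ℓ₁ / 2) + cosh (ℓ₀ / 2) * cosh (ℓ₂ / 2)) / (1 + cosh (ℓ₀ / 2)) ≤
      exp (L / 2) := by
    rw [div_le_iff₀' (by positivity), one_add_mul]
    gcongr
    · exact cosh_half_le_exp_half h1
    · exact cosh_half_le_exp_half (by rwa [abs_of_pos hℓ₂])
  rw [← exp_lt_exp, exp_add, exp_log (by positivity)]
  calc exp x₀ < _ := exp_truncated_side_lt h0 hℓ₂ hhex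
    _ ≤ 2 * exp (L / 2) / sinh (l / 2) := by
      gcongr
      exact sinh_le_sinh.2 (by gcongr)
    _ = exp (L / 2) * (2 / sinh (l / 2)) := by ring

theorem truncated_side_bound_one_cusp (l L ℓ₀ ℓ₁ ℓ₂ x₀ : ℝ)
    (hl : 0 < l) (hlL : l ≤ L)
    (h1 : l ≤ ℓ₁) (h1' : ℓ₁ ≤ L) (h2 : l ≤ ℓ₂) (h2' : ℓ₂ ≤ L)
    (h0 : 0 < ℓ₀) (hx : 0 ≤ x₀ + η ℓ₀)
    (hhex : Real.cosh (x₀ + η ℓ₀) =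
      (Real.cosh (ℓ₁ / 2) + Real.cosh (ℓ₀ / 2) * Real.cosh (ℓ₂ / 2)) /
        (Real.sinh (ℓ₀ / 2) * Real.sinh (ℓ₂ / 2))) :
    x₀ < L / 2 + Real.log ((1 + Real.cosh (ℓ₀ / 2)) / Real.sinh (l / 2)) := by
  have := sinh_half_pos hl
  have hℓ₁ : |ℓ₁| ≤ L := (abs_of_pos (hl.trans_le h1)).trans_le h1'
  exact (truncated_side_bound_one_cusp_general hl hℓ₁ h2 h2' h0 hhex).trans_le <| by
    gcongr; linarith [one_le_cosh (ℓ₀ / 2)]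
end

section
/- Let l, L, ℓ₁, ℓ₂ be real numbers with 0 < l ≤ L, l ≤ ℓ₁ ≤ L, l ≤ ℓ₂ ≤ L. Suppose f : ℝ → ℝ and δ > 0 are such that for every ℓ₀ with 0 < ℓ₀ < δ one has f(ℓ₀) + η(ℓ₀) ≥ 0 and cosh(f(ℓ₀) + η(ℓ₀)) = (cosh(ℓ₁/2) + cosh(ℓ₀/2)·cosh(ℓ₂/2)) / (sinh(ℓ₀/2)·sinh(ℓ₂/2)), where η(ℓ) = arsinh(1/sinh(ℓ/2)). If f(ℓ₀) tends to a real number x as ℓ₀ tends to 0 from the right, then x ≤ L/2 + log(2 / sinh(l/2)). -/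
open Filter Topology

lemma sinh_η (ℓ : ℝ) : Real.sinh (η ℓ) = 1 / Real.sinh (ℓ / 2) :=
  Real.sinh_arsinh _

lemma cosh_η {ℓ : ℝ} (hℓ : 0 < ℓ) : Real.cosh (η ℓ) = Real.cosh (ℓ / 2) / Real.sinh (ℓ / 2) := by
  have hs : 0 < Real.sinh (ℓ / 2) := Real.sinh_pos_iff.mpr (half_pos hℓ)
  have hsq : 1 + (1 / Real.sinh (ℓ / 2)) ^ 2 = (Real.cosh (ℓ / 2) / Real.sinh (ℓ / 2)) ^ 2 := by
    rw [div_pow, div_pow, Real.cosh_sq]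
    field_simp
  rw [η, Real.cosh_arsinh, hsq, Real.sqrt_sq (div_nonneg (Real.cosh_pos _).le hs.le)]

lemma cosh_add_η_mul_sinh {ℓ : ℝ} (hℓ : 0 < ℓ) (y : ℝ) :
    Real.cosh (y + η ℓ) * Real.sinh (ℓ / 2) = Real.cosh y * Real.cosh (ℓ / 2) + Real.sinh y := by
  have hs : Real.sinh (ℓ / 2) ≠ 0 := (Real.sinh_pos_iff.mpr (half_pos hℓ)).ne'
  rw [Real.cosh_add, sinh_η, cosh_η hℓ]
  field_simp

lemma exp_truncated_side_limit_eq {ℓ₁ ℓ₂ x : ℝ} {f : ℝ → ℝ}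
    (hhex : ∀ᶠ ℓ₀ in 𝓝[>] 0, Real.cosh (f ℓ₀ + η ℓ₀) =
      (Real.cosh (ℓ₁ / 2) + Real.cosh (ℓ₀ / 2) * Real.cosh (ℓ₂ / 2)) /
        (Real.sinh (ℓ₀ / 2) * Real.sinh (ℓ₂ / 2)))
    (hlim : Tendsto f (𝓝[>] 0) (𝓝 x)) :
    Real.exp x = (Real.cosh (ℓ₁ / 2) + Real.cosh (ℓ₂ / 2)) / Real.sinh (ℓ₂ / 2) := by
  have hcosh : Tendsto (fun ℓ₀ : ℝ => Real.cosh (ℓ₀ / 2)) (𝓝[>] 0) (𝓝 1) := by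
    have hcont : Continuous fun ℓ₀ : ℝ => Real.cosh (ℓ₀ / 2) := by fun_prop
    simpa using (hcont.tendsto 0).mono_left nhdsWithin_le_nhds
  have hleft : Tendsto (fun ℓ₀ => Real.cosh (f ℓ₀) * Real.cosh (ℓ₀ / 2) + Real.sinh (f ℓ₀))
      (𝓝[>] 0) (𝓝 (Real.exp x)) := by
    rw [← Real.cosh_add_sinh, ← mul_one (Real.cosh x)]
    exact (((Real.continuous_cosh.tendsto x).comp hlim).mul hcosh).add
      ((Real.continuous_sinh.tendsto x).comp hlim)
  have hright : Tendsto
      (fun ℓ₀ => (Real.cosh (ℓ₁ / 2) + Real.cosh (ℓ₀ / 2) * Real.cosh (ℓ₂ / 2)) /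
        Real.sinh (ℓ₂ / 2))
      (𝓝[>] 0) (𝓝 ((Real.cosh (ℓ₁ / 2) + Real.cosh (ℓ₂ / 2)) / Real.sinh (ℓ₂ / 2))) := by
    simpa only [one_mul] using ((hcosh.mul_const _).const_add _).div_const _
  refine tendsto_nhds_unique_of_eventuallyEq hleft hright ?_
  filter_upwards [hhex, self_mem_nhdsWithin] with ℓ₀ hℓ₀ hpos
  have hs : Real.sinh (ℓ₀ / 2) ≠ 0 := (Real.sinh_pos_iff.mpr (half_pos hpos)).ne'
  rw [← cosh_add_η_mul_sinh hpos, hℓ₀, div_mul_eq_mul_div, mul_comm, mul_div_mul_left _ _ hs]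

lemma cosh_le_exp_abs_s9 (y : ℝ) : Real.cosh y ≤ Real.exp |y| := by
  have hsinh : 0 ≤ Real.sinh |y| := Real.sinh_nonneg_iff.mpr (abs_nonneg y)
  calc Real.cosh y = Real.cosh |y| := (Real.cosh_abs y).symm
    _ ≤ Real.cosh |y| + Real.sinh |y| := le_add_of_nonneg_right hsinh
    _ = Real.exp |y| := Real.cosh_add_sinh _

theorem truncated_side_limit_bound_one_cusp_general {l L ℓ₁ ℓ₂ x : ℝ} {f : ℝ → ℝ}
    (hl : 0 < l) (h1 : |ℓ₁| ≤ L) (h2 : l ≤ ℓ₂) (h2' : ℓ₂ ≤ L)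
    (hhex : ∀ᶠ ℓ₀ in 𝓝[>] 0, Real.cosh (f ℓ₀ + η ℓ₀) =
      (Real.cosh (ℓ₁ / 2) + Real.cosh (ℓ₀ / 2) * Real.cosh (ℓ₂ / 2)) /
        (Real.sinh (ℓ₀ / 2) * Real.sinh (ℓ₂ / 2)))
    (hlim : Tendsto f (𝓝[>] 0) (𝓝 x)) :
    x ≤ L / 2 + Real.log (2 / Real.sinh (l / 2)) := by
  have hs : 0 < Real.sinh (l / 2) := Real.sinh_pos_iff.mpr (half_pos hl)
  have hsinh : Real.sinh (l / 2) ≤ Real.sinh (ℓ₂ / 2) := Real.sinh_le_sinh.mpr (by linarith)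
  have hcosh : ∀ ℓ, |ℓ| ≤ L → Real.cosh (ℓ / 2) ≤ Real.exp (L / 2) := fun ℓ hℓ =>
    (cosh_le_exp_abs_s9 _).trans (Real.exp_le_exp.mpr (by rw [abs_div, abs_two]; linarith))
  have hc₁ := hcosh ℓ₁ h1
  have hc₂ := hcosh ℓ₂ (abs_le.mpr ⟨by linarith, h2'⟩)
  rw [← Real.exp_le_exp]
  calc Real.exp x = (Real.cosh (ℓ₁ / 2) + Real.cosh (ℓ₂ / 2)) / Real.sinh (ℓ₂ / 2) :=
        exp_truncated_side_limit_eq hhex hlim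
    _ ≤ (Real.exp (L / 2) + Real.exp (L / 2)) / Real.sinh (l / 2) := by gcongr
    _ = Real.exp (L / 2 + Real.log (2 / Real.sinh (l / 2))) := by
        rw [Real.exp_add, Real.exp_log (div_pos two_pos hs)]
        ring

theorem truncated_side_limit_bound_one_cusp (l L ℓ₁ ℓ₂ : ℝ) (f : ℝ → ℝ) (δ : ℝ)
    (hl : 0 < l) (hlL : l ≤ L)
    (h1 : l ≤ ℓ₁) (h1' : ℓ₁ ≤ L) (h2 : l ≤ ℓ₂) (h2' : ℓ₂ ≤ L)
    (hδ : 0 < δ)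
    (hnn : ∀ ℓ₀, 0 < ℓ₀ → ℓ₀ < δ → 0 ≤ f ℓ₀ + η ℓ₀)
    (hhex : ∀ ℓ₀, 0 < ℓ₀ → ℓ₀ < δ →
      Real.cosh (f ℓ₀ + η ℓ₀) =
        (Real.cosh (ℓ₁ / 2) + Real.cosh (ℓ₀ / 2) * Real.cosh (ℓ₂ / 2)) /
          (Real.sinh (ℓ₀ / 2) * Real.sinh (ℓ₂ / 2)))
    (x : ℝ)
    (hlim : Filter.Tendsto f (nhdsWithin 0 (Set.Ioi 0)) (nhds x)) :
    x ≤ L / 2 + Real.log (2 / Real.sinh (l / 2)) := by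
  have hhex' := eventually_of_mem (Ioo_mem_nhdsGT hδ) fun ℓ₀ h => hhex ℓ₀ h.1 h.2
  exact truncated_side_limit_bound_one_cusp_general hl (abs_le.mpr ⟨by linarith, h1'⟩) h2 h2'
    hhex' hlim
end

section
/- Let l, L, ℓ₀, ℓ₁ be real numbers with 0 < l ≤ L, l ≤ ℓ₁ ≤ L, and ℓ₀ > 0. Let z₀ be a real number with z₀ + 2η(ℓ₀) ≥ 0 satisfying cosh(z₀ + 2η(ℓ₀)) = (cosh(ℓ₁/2) + cosh²(ℓ₀/2)) / sinh²(ℓ₀/2), where η(ℓ) = arsinh(1/sinh(ℓ/2)). Then z₀ ≤ log(cosh(L/2) + cosh²(ℓ₀/2)). -/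
/-!
The side `x = z₀ + 2 * η ℓ₀` satisfies `x ≤ log (2 * cosh x)`, and each collar has width at least
`log (2 / sinh (ℓ₀ / 2))`. Subtracting the two collars from the side multiplies `cosh x` by
`sinh (ℓ₀ / 2) ^ 2 / 2` inside the logarithm, which cancels the denominator of the hexagon formula.
-/

open Real

lemma le_log_two_mul_cosh (x : ℝ) : x ≤ log (2 * cosh x) := by
  rw [le_log_iff_exp_le (by positivity), cosh_eq, mul_div_cancel₀ _ two_ne_zero]
  exact le_add_of_nonneg_right (exp_pos (-x)).le

lemma log_two_mul_le_arsinh {x : ℝ} (hx : 0 < x) : log (2 * x) ≤ arsinh x := by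
  have hsqrt : x ≤ √(1 + x ^ 2) := le_sqrt_of_sq_le (by linarith)
  rw [log_le_iff_le_exp (by positivity), exp_arsinh]
  linarith

lemma log_two_div_sinh_le_η {ℓ : ℝ} (hℓ : 0 < ℓ) : log (2 / sinh (ℓ / 2)) ≤ η ℓ := by
  have hsinh : 0 < sinh (ℓ / 2) := sinh_pos_iff.2 (half_pos hℓ)
  simpa only [η, mul_one_div] using log_two_mul_le_arsinh (one_div_pos.2 hsinh)

lemma le_log_sinh_sq_mul_cosh_add_two_mul_η {ℓ : ℝ} (hℓ : 0 < ℓ) (z : ℝ) :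
    z ≤ log (sinh (ℓ / 2) ^ 2 * cosh (z + 2 * η ℓ) / 2) := by
  have hsinh : sinh (ℓ / 2) ≠ 0 := (sinh_pos_iff.2 (half_pos hℓ)).ne'
  calc
    z = z + 2 * η ℓ - 2 * η ℓ := by ring
    _ ≤ log (2 * cosh (z + 2 * η ℓ)) - 2 * log (2 / sinh (ℓ / 2)) := by
      gcongr
      · exact le_log_two_mul_cosh _
      · exact log_two_div_sinh_le_η hℓ
    _ = log (2 * cosh (z + 2 * η ℓ) / (2 / sinh (ℓ / 2)) ^ 2) := by
      rw [log_div (by positivity) (pow_ne_zero 2 (div_ne_zero two_ne_zero hsinh)),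
        log_pow, Nat.cast_ofNat]
    _ = log (sinh (ℓ / 2) ^ 2 * cosh (z + 2 * η ℓ) / 2) := by
      congr 1
      field

theorem truncated_side_bound_two_cusps_general {ℓ₀ ℓ₁ z₀ : ℝ} (h0 : 0 < ℓ₀)
    (hhex : cosh (z₀ + 2 * η ℓ₀) = (cosh (ℓ₁ / 2) + cosh (ℓ₀ / 2) ^ 2) / sinh (ℓ₀ / 2) ^ 2) :
    z₀ ≤ log ((cosh (ℓ₁ / 2) + cosh (ℓ₀ / 2) ^ 2) / 2) := by
  have hsinh : sinh (ℓ₀ / 2) ≠ 0 := (sinh_pos_iff.2 (half_pos h0)).ne'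
  simpa only [hhex, mul_div_cancel₀ _ (pow_ne_zero 2 hsinh)] using
    le_log_sinh_sq_mul_cosh_add_two_mul_η h0 z₀

theorem truncated_side_bound_two_cusps (l L ℓ₀ ℓ₁ z₀ : ℝ)
    (hl : 0 < l) (hlL : l ≤ L)
    (h1 : l ≤ ℓ₁) (h1' : ℓ₁ ≤ L) (h0 : 0 < ℓ₀)
    (hz : 0 ≤ z₀ + 2 * η ℓ₀)
    (hhex : Real.cosh (z₀ + 2 * η ℓ₀) =
      (Real.cosh (ℓ₁ / 2) + Real.cosh (ℓ₀ / 2) ^ 2) / Real.sinh (ℓ₀ / 2) ^ 2) :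
    z₀ ≤ Real.log (Real.cosh (L / 2) + Real.cosh (ℓ₀ / 2) ^ 2) := by
  have hcosh : cosh (ℓ₁ / 2) ≤ cosh (L / 2) :=
    cosh_le_cosh.2 (abs_le_abs_of_nonneg (by linarith) (by linarith))
  exact (truncated_side_bound_two_cusps_general h0 hhex).trans
    (log_le_log (by positivity) ((half_le_self (by positivity)).trans (by gcongr)))
end

section
/- Let l, L, ℓ₁ be real numbers with 0 < l ≤ L and l ≤ ℓ₁ ≤ L. Suppose g : ℝ → ℝ and δ > 0 are such that for every ℓ₀ with 0 < ℓ₀ < δ one has g(ℓ₀) + 2η(ℓ₀) ≥ 0 and cosh(g(ℓ₀) + 2η(ℓ₀)) = (cosh(ℓ₁/2) + cosh²(ℓ₀/2)) / sinh²(ℓ₀/2), where η(ℓ) = arsinh(1/sinh(ℓ/2)). If g(ℓ₀) tends to a real number z as ℓ₀ tends to 0 from the right, then z ≤ log(cosh(L/2) + 1). -/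
section

open Filter Real Topology

theorem sinh_half_mul_exp_η {ℓ : ℝ} (hℓ : 0 < ℓ) :
    sinh (ℓ / 2) * exp (η ℓ) = cosh (ℓ / 2) + 1 := by
  have hs : 0 < sinh (ℓ / 2) := sinh_pos_iff.2 (half_pos hℓ)
  have hsqrt : √(1 + (1 / sinh (ℓ / 2)) ^ 2) = cosh (ℓ / 2) / sinh (ℓ / 2) := by
    rw [sqrt_eq_iff_mul_self_eq (by positivity) (by positivity)]
    field_simp
    rw [cosh_sq]
  rw [η, exp_arsinh, hsqrt]
  field_simp
  ring

theorem sinh_half_mul_exp_neg_η {ℓ : ℝ} (hℓ : 0 < ℓ) :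
    sinh (ℓ / 2) * exp (-η ℓ) = cosh (ℓ / 2) - 1 := by
  have hc : cosh (ℓ / 2) + 1 ≠ 0 := by positivity
  refine mul_left_cancel₀ hc ?_
  calc (cosh (ℓ / 2) + 1) * (sinh (ℓ / 2) * exp (-η ℓ))
      = sinh (ℓ / 2) ^ 2 * (exp (η ℓ) * exp (-η ℓ)) := by rw [← sinh_half_mul_exp_η hℓ]; ring
    _ = sinh (ℓ / 2) ^ 2 := by rw [← exp_add, add_neg_cancel, exp_zero, mul_one]
    _ = (cosh (ℓ / 2) + 1) * (cosh (ℓ / 2) - 1) := by rw [sinh_sq]; ring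

theorem two_mul_sinh_half_sq_mul_cosh_add_two_mul_η {ℓ : ℝ} (hℓ : 0 < ℓ) (x : ℝ) :
    2 * sinh (ℓ / 2) ^ 2 * cosh (x + 2 * η ℓ) =
      exp x * (cosh (ℓ / 2) + 1) ^ 2 + exp (-x) * (cosh (ℓ / 2) - 1) ^ 2 := by
  have hexp (y t : ℝ) : exp (y + 2 * t) = exp y * exp t ^ 2 := by
    rw [exp_add, two_mul, exp_add, sq]
  rw [cosh_eq, neg_add, ← mul_neg, hexp, hexp, ← sinh_half_mul_exp_η hℓ,
    ← sinh_half_mul_exp_neg_η hℓ]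
  ring

theorem tendsto_cosh_half_nhdsGT_zero :
    Tendsto (fun ℓ : ℝ ↦ cosh (ℓ / 2)) (𝓝[>] 0) (𝓝 1) := by
  have hcont : Continuous fun ℓ : ℝ ↦ cosh (ℓ / 2) := by fun_prop
  simpa using (hcont.tendsto 0).mono_left nhdsWithin_le_nhds

/-- The third boundary component is encoded by `a`: it is `cosh (ℓ₁ / 2)` for a geodesic of length
`ℓ₁`, `1` for a cusp and `cos (θ / 2)` for a cone point of angle `θ`. -/
theorem truncated_side_limit_bound_two_cusps_general {g : ℝ → ℝ} {a z : ℝ}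
    (hhex : ∀ᶠ ℓ₀ in 𝓝[>] 0,
      cosh (g ℓ₀ + 2 * η ℓ₀) = (a + cosh (ℓ₀ / 2) ^ 2) / sinh (ℓ₀ / 2) ^ 2)
    (hlim : Tendsto g (𝓝[>] 0) (𝓝 z)) :
    z = log ((a + 1) / 2) := by
  have hcosh := tendsto_cosh_half_nhdsGT_zero
  have hleft : Tendsto
      (fun ℓ₀ ↦ exp (g ℓ₀) * (cosh (ℓ₀ / 2) + 1) ^ 2 + exp (-g ℓ₀) * (cosh (ℓ₀ / 2) - 1) ^ 2)
      (𝓝[>] 0) (𝓝 (exp z * (1 + 1) ^ 2 + exp (-z) * (1 - 1) ^ 2)) :=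
    (hlim.rexp.mul ((hcosh.add_const 1).pow 2)).add
      (hlim.neg.rexp.mul ((hcosh.sub_const 1).pow 2))
  have hright : Tendsto (fun ℓ₀ ↦ 2 * (a + cosh (ℓ₀ / 2) ^ 2)) (𝓝[>] 0) (𝓝 (2 * (a + 1 ^ 2))) :=
    ((hcosh.pow 2).const_add a).const_mul 2
  have hlimits : exp z * (1 + 1) ^ 2 + exp (-z) * (1 - 1) ^ 2 = 2 * (a + 1 ^ 2) := by
    refine tendsto_nhds_unique_of_eventuallyEq hleft hright ?_
    filter_upwards [hhex, self_mem_nhdsWithin] with ℓ₀ hℓ₀ hpos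
    have hs : 0 < sinh (ℓ₀ / 2) := sinh_pos_iff.2 (half_pos hpos)
    rw [← two_mul_sinh_half_sq_mul_cosh_add_two_mul_η hpos, hℓ₀]
    field_simp
  have hexp : exp z = (a + 1) / 2 := by linear_combination hlimits / 4
  rw [← hexp, log_exp]

end

theorem truncated_side_limit_bound_two_cusps (l L ℓ₁ : ℝ) (g : ℝ → ℝ) (δ : ℝ)
    (hl : 0 < l) (hlL : l ≤ L)
    (h1 : l ≤ ℓ₁) (h1' : ℓ₁ ≤ L) (hδ : 0 < δ)
    (hnn : ∀ ℓ₀, 0 < ℓ₀ → ℓ₀ < δ → 0 ≤ g ℓ₀ + 2 * η ℓ₀)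
    (hhex : ∀ ℓ₀, 0 < ℓ₀ → ℓ₀ < δ →
      Real.cosh (g ℓ₀ + 2 * η ℓ₀) =
        (Real.cosh (ℓ₁ / 2) + Real.cosh (ℓ₀ / 2) ^ 2) / Real.sinh (ℓ₀ / 2) ^ 2)
    (z : ℝ)
    (hlim : Filter.Tendsto g (nhdsWithin 0 (Set.Ioi 0)) (nhds z)) :
    z ≤ Real.log (Real.cosh (L / 2) + 1) := by
  have hz : z = Real.log ((Real.cosh (ℓ₁ / 2) + 1) / 2) :=
    truncated_side_limit_bound_two_cusps_general
      (by filter_upwards [Ioo_mem_nhdsGT hδ] with ℓ₀ hℓ₀ using hhex ℓ₀ hℓ₀.1 hℓ₀.2) hlim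
  have hcosh : Real.cosh (ℓ₁ / 2) ≤ Real.cosh (L / 2) :=
    Real.cosh_strictMonoOn.monotoneOn (Set.mem_Ici.2 (by linarith)) (Set.mem_Ici.2 (by linarith))
      (by linarith)
  rw [hz]
  exact Real.log_le_log (by positivity) (by linarith [Real.cosh_pos (ℓ₁ / 2)])
end
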